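/- (Boundary identity via the multiplier (x−1)∂_x y.) Let a be a weight, T > 0, and let y be a classical solution of the degenerate wave equation on [0,T] with y(t,c) = y(t,d) = 0 for all t ∈ [0,T], satisfying for every t ∈ [0,T]: lim_{x↗1} (1−x)·(∂_t y(t,x))² = 0, lim_{x↘1} (x−1)·(∂_t y(t,x))² = 0, lim_{x↗1} (1−x)·a(x)·(∂_x y(t,x))² = 0 and lim_{x↘1} (x−1)·a(x)·(∂_x y(t,x))² = 0; assume there exists h ∈ L¹(c,d) dominating (∂_t y(t,x))² + (1 + (|x−1|·|a'(x)|)/a(x))·a(x)·(∂_x y(t,x))² + |x−1|·(|∂_x y(t,x)·∂_{tt} y(t,x)| + |∂_t y(t,x)·∂_{tx} y(t,x)|) for all (t,x) ∈ [0,T] × ((c,d) \ {1}). Then (1−c)·a(c)·∫_0^T (∂_x y(t,c))² dt + (d−1)·a(d)·∫_0^T (∂_x y(t,d))² dt = 2·∫_{(c,d)} [ (x−1)·∂_x y(t,x)·∂_t y(t,x) ]_{t=0}^{t=T} dx + ∫_0^T ∫_{(c,d)} ( (∂_t y(t,x))² + [1 − (x−1)·a'(x)/a(x)]·a(x)·(∂_x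 y(t,x))² ) dx dt. -/

import Mathlib

open MeasureTheory Set Filter Topology

noncomputable section

/-- A *weight* on `[c,d]` with degeneration point `1`. -/
structure IsWeight (c d : ℝ) (a a' : ℝ → ℝ) : Prop where
  cont : ContinuousOn a (Set.Icc c d)
  hderiv : ∀ x ∈ Set.Icc c d \ {1}, HasDerivWithinAt a (a' x) (Set.Icc c d \ {1}) x
  contDeriv : ContinuousOn a' (Set.Icc c d \ {1})
  zero_at_one : a 1 = 0
  pos : ∀ x ∈ Set.Icc c d \ {1}, 0 < a x

/-- A classical solution `y` of the degenerate wave equation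
`∂_tt y = ∂_x (a ∂_x y)` on `[0,T] × ([c,1) ∪ (1,d])`, carrying its partial
derivatives `yt = ∂_t y`, `yx = ∂_x y`, `ytt = ∂_tt y`, `ytx = ∂_x ∂_t y` and
`ww = ∂_x (a ∂_x y)`, all continuous on `[0,T] × ([c,1) ∪ (1,d])`. -/
structure ClassicalSolution (c d T : ℝ) (a : ℝ → ℝ)
    (y yt yx ytt ytx ww : ℝ → ℝ → ℝ) : Prop where
  dt : ∀ t ∈ Set.Icc (0:ℝ) T, ∀ x ∈ Set.Icc c d \ {1},
    HasDerivWithinAt (fun s => y s x) (yt t x) (Set.Icc 0 T) t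
  dtt : ∀ t ∈ Set.Icc (0:ℝ) T, ∀ x ∈ Set.Icc c d \ {1},
    HasDerivWithinAt (fun s => yt s x) (ytt t x) (Set.Icc 0 T) t
  dx : ∀ t ∈ Set.Icc (0:ℝ) T, ∀ x ∈ Set.Icc c d \ {1},
    HasDerivWithinAt (fun z => y t z) (yx t x) (Set.Icc c d \ {1}) x
  dtx : ∀ t ∈ Set.Icc (0:ℝ) T, ∀ x ∈ Set.Icc c d \ {1},
    HasDerivWithinAt (fun z => yt t z) (ytx t x) (Set.Icc c d \ {1}) x
  dax : ∀ t ∈ Set.Icc (0:ℝ) T, ∀ x ∈ Set.Icc c d \ {1},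
    HasDerivWithinAt (fun z => a z * yx t z) (ww t x) (Set.Icc c d \ {1}) x
  cy : ContinuousOn (fun p : ℝ × ℝ => y p.1 p.2) (Set.Icc 0 T ×ˢ (Set.Icc c d \ {1}))
  cyt : ContinuousOn (fun p : ℝ × ℝ => yt p.1 p.2) (Set.Icc 0 T ×ˢ (Set.Icc c d \ {1}))
  cyx : ContinuousOn (fun p : ℝ × ℝ => yx p.1 p.2) (Set.Icc 0 T ×ˢ (Set.Icc c d \ {1}))
  cytt : ContinuousOn (fun p : ℝ × ℝ => ytt p.1 p.2) (Set.Icc 0 T ×ˢ (Set.Icc c d \ {1}))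
  cytx : ContinuousOn (fun p : ℝ × ℝ => ytx p.1 p.2) (Set.Icc 0 T ×ˢ (Set.Icc c d \ {1}))
  cww : ContinuousOn (fun p : ℝ × ℝ => ww p.1 p.2) (Set.Icc 0 T ×ˢ (Set.Icc c d \ {1}))
  wave : ∀ t ∈ Set.Icc (0:ℝ) T, ∀ x ∈ Set.Ioo c d \ {1}, ytt t x = ww t x

lemma S_mem_nhds {c d x : ℝ} (hx : x ∈ Set.Ioo c d \ {1}) : Set.Icc c d \ {1} ∈ 𝓝 x :=
  Filter.mem_of_superset ((isOpen_Ioo.sdiff isClosed_singleton).mem_nhds hx)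
    (Set.sdiff_subset_sdiff_left Set.Ioo_subset_Icc_self)

lemma Ioo_sub_S {c d x : ℝ} (hx : x ∈ Set.Ioo c d \ {1}) : x ∈ Set.Icc c d \ {1} :=
  ⟨Set.Ioo_subset_Icc_self hx.1, hx.2⟩

lemma cont_t {T : ℝ} {S : Set ℝ} {f : ℝ → ℝ → ℝ}
    (hf : ContinuousOn (fun p : ℝ × ℝ => f p.1 p.2) (Set.Icc 0 T ×ˢ S)) {x : ℝ} (hx : x ∈ S) :
    ContinuousOn (fun t => f t x) (Set.Icc 0 T) :=
  hf.comp (f := fun t => (t, x)) (by fun_prop) (fun t ht => ⟨ht, hx⟩)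

lemma cont_x {T : ℝ} {S : Set ℝ} {f : ℝ → ℝ → ℝ}
    (hf : ContinuousOn (fun p : ℝ × ℝ => f p.1 p.2) (Set.Icc 0 T ×ˢ S)) {t : ℝ}
    (ht : t ∈ Set.Icc 0 T) :
    ContinuousOn (fun x => f t x) S :=
  hf.comp (f := fun x => (t, x)) (by fun_prop) (fun x hx => ⟨ht, hx⟩)

/-- Exchange of derivatives, in integrated form. -/
lemma yx_integral {c d T : ℝ} {a : ℝ → ℝ} {y yt yx ytt ytx ww : ℝ → ℝ → ℝ}
    (hsol : ClassicalSolution c d T a y yt yx ytt ytx ww)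
    {x : ℝ} (hx : x ∈ Set.Ioo c d \ {1}) {t : ℝ} (ht : t ∈ Set.Icc 0 T) :
    yx t x = yx 0 x + ∫ s in (0:ℝ)..t, ytx s x := by
  have hT0 : (0:ℝ) ∈ Set.Icc 0 T := ⟨le_rfl, ht.1.trans ht.2⟩
  have hsub : Set.Icc 0 t ⊆ Set.Icc 0 T := Set.Icc_subset_Icc_right ht.2
  have hopen : IsOpen (Set.Ioo c d \ {1}) := isOpen_Ioo.sdiff isClosed_singleton
  obtain ⟨ε, hε, hball⟩ := Metric.nhds_basis_closedBall.mem_iff.1 (hopen.mem_nhds hx)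
  have hballS : Metric.closedBall x ε ⊆ Set.Icc c d \ {1} := fun z hz => Ioo_sub_S (hball hz)
  obtain ⟨C, hC⟩ := ((isCompact_Icc (a := (0:ℝ)) (b := T)).prod
    (isCompact_closedBall x ε)).exists_bound_of_continuousOn
      (hsol.cytx.mono (Set.prod_mono le_rfl hballS))
  have hIntg : ∀ z ∈ Metric.closedBall x ε, IntervalIntegrable (fun s => yt s z) volume 0 t := by
    intro z hz
    apply ContinuousOn.intervalIntegrable
    rw [Set.uIcc_of_le ht.1]
    exact (cont_t hsol.cyt (hballS hz)).mono hsub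
  have hIoc : Set.uIoc 0 t ⊆ Set.Icc 0 T := by
    rw [Set.uIoc_of_le ht.1]
    exact Set.Ioc_subset_Icc_self.trans hsub
  have key := intervalIntegral.hasDerivAt_integral_of_dominated_loc_of_deriv_le
    (μ := volume) (F := fun z s => yt s z) (F' := fun z s => ytx s z) (a := 0) (b := t)
    (bound := fun _ => C) (x₀ := x) (s := Metric.ball x ε) (Metric.ball_mem_nhds x hε)
    (by
      filter_upwards [Metric.ball_mem_nhds x hε] with z hz
      exact (hIntg z (Metric.ball_subset_closedBall hz)).def'.aestronglyMeasurable)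
    (hIntg x (Metric.mem_closedBall_self hε.le))
    (by
      refine ContinuousOn.aestronglyMeasurable ?_ measurableSet_uIoc
      exact (cont_t hsol.cytx (Ioo_sub_S hx)).mono hIoc)
    (Filter.Eventually.of_forall fun s hs z hz =>
      hC (s, z) ⟨hIoc hs, Metric.ball_subset_closedBall hz⟩)
    (by simp)
    (Filter.Eventually.of_forall fun s hs z hz =>
      (hsol.dtx s (hIoc hs) z (hballS (Metric.ball_subset_closedBall hz))).hasDerivAt
        (S_mem_nhds (hball (Metric.ball_subset_closedBall hz))))
  have h1 : HasDerivAt (fun z => y t z - y 0 z) (yx t x - yx 0 x) x :=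
    ((hsol.dx t ht x (Ioo_sub_S hx)).hasDerivAt (S_mem_nhds hx)).sub
      ((hsol.dx 0 hT0 x (Ioo_sub_S hx)).hasDerivAt (S_mem_nhds hx))
  have h2 : (fun z => y t z - y 0 z) =ᶠ[𝓝 x] fun z => ∫ s in (0:ℝ)..t, yt s z := by
    filter_upwards [Metric.ball_mem_nhds x hε] with z hz
    have hz' := Metric.ball_subset_closedBall hz
    refine (intervalIntegral.integral_eq_sub_of_hasDerivAt_of_le ht.1
      (f := fun s => y s z) ?_ ?_ (hIntg z hz')).symm
    · exact (cont_t hsol.cy (hballS hz')).mono hsub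
    · intro s hs
      exact (hsol.dt s (hsub (Set.Ioo_subset_Icc_self hs)) z (hballS hz')).hasDerivAt
        (Icc_mem_nhds hs.1 (hs.2.trans_le ht.2))
  have h3 := h1.unique (key.2.congr_of_eventuallyEq h2)
  linarith

lemma time_id {c d T : ℝ} {a : ℝ → ℝ} {y yt yx ytt ytx ww : ℝ → ℝ → ℝ} (hT : 0 < T)
    (hsol : ClassicalSolution c d T a y yt yx ytt ytx ww)
    {x : ℝ} (hx : x ∈ Set.Ioo c d \ {1}) :
    (∫ t in (0:ℝ)..T, (x - 1) * (ytx t x * yt t x + yx t x * ytt t x))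
      = (x - 1) * yx T x * yt T x - (x - 1) * yx 0 x * yt 0 x := by
  have hxS := Ioo_sub_S hx
  have c1 := cont_t hsol.cytx hxS
  have c2 := cont_t hsol.cyt hxS
  have c3 := cont_t hsol.cyx hxS
  have c4 := cont_t hsol.cytt hxS
  have hd : ∀ t ∈ Set.Ioo 0 T, HasDerivAt (fun s => yx s x) (ytx t x) t := by
    intro t ht
    have hn : Set.Icc 0 T ∈ 𝓝 t := Icc_mem_nhds ht.1 ht.2
    have hh : HasDerivAt (fun u => ∫ s in (0:ℝ)..u, ytx s x) (ytx t x) t := by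
      apply intervalIntegral.integral_hasDerivAt_right
      · apply ContinuousOn.intervalIntegrable
        rw [Set.uIcc_of_le ht.1.le]
        exact c1.mono (Set.Icc_subset_Icc_right ht.2.le)
      · exact ⟨Set.Icc 0 T, hn, c1.aestronglyMeasurable measurableSet_Icc⟩
      · exact c1.continuousAt hn
    refine (hh.const_add (yx 0 x)).congr_of_eventuallyEq ?_
    filter_upwards [hn] with s hs
    exact yx_integral hsol hx hs
  have := intervalIntegral.integral_eq_sub_of_hasDerivAt_of_le hT.le
    (f := fun t => (x - 1) * yx t x * yt t x)
    (f' := fun t => (x - 1) * (ytx t x * yt t x + yx t x * ytt t x)) (by fun_prop)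
    (fun t ht => by
      have h1 := ((hd t ht).const_mul (x - 1)).mul
        ((hsol.dtt t (Set.Ioo_subset_Icc_self ht) x hxS).hasDerivAt (Icc_mem_nhds ht.1 ht.2))
      refine h1.congr_deriv ?_
      ring)
    (by
      apply ContinuousOn.intervalIntegrable
      rw [Set.uIcc_of_le hT.le]
      fun_prop)
  exact this

lemma restrict_U (c d : ℝ) :
    (volume.restrict (Set.Ioo c d) : Measure ℝ) = volume.restrict (Set.Ioo c d \ {1}) := by
  refine (Measure.restrict_congr_set ?_).symm
  exact sdiff_null_ae_eq_self (by simp)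

lemma prod_int {c d T : ℝ} {f : ℝ → ℝ → ℝ} {h : ℝ → ℝ}
    (hf : ContinuousOn (fun p : ℝ × ℝ => f p.1 p.2) (Set.Icc 0 T ×ˢ (Set.Icc c d \ {1})))
    (hhint : MeasureTheory.IntegrableOn h (Set.Ioo c d))
    (hb : ∀ t ∈ Set.Icc (0:ℝ) T, ∀ x ∈ Set.Ioo c d \ {1}, |f t x| ≤ h x) :
    Integrable (fun p : ℝ × ℝ => f p.1 p.2)
      ((volume.restrict (Set.Ioc 0 T)).prod (volume.restrict (Set.Ioo c d))) := by
  have hm : MeasurableSet (Set.Ioo c d \ {1}) :=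
    measurableSet_Ioo.diff (measurableSet_singleton 1)
  have hi : Integrable (fun p : ℝ × ℝ => h p.2)
      ((volume.restrict (Set.Ioc 0 T)).prod (volume.restrict (Set.Ioo c d))) :=
    Integrable.comp_snd (ν := volume.restrict (Set.Ioo c d)) hhint _
  refine hi.mono' ?_ ?_
  · rw [restrict_U, Measure.prod_restrict]
    refine ContinuousOn.aestronglyMeasurable (hf.mono ?_) (measurableSet_Ioc.prod hm)
    exact Set.prod_mono Set.Ioc_subset_Icc_self
      (Set.sdiff_subset_sdiff_left Set.Ioo_subset_Icc_self)
  · rw [restrict_U, Measure.prod_restrict]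
    filter_upwards [ae_restrict_mem (measurableSet_Ioc.prod hm)] with p hp
    exact hb p.1 (Set.Ioc_subset_Icc_self hp.1) p.2 hp.2

lemma slice_int {c d T : ℝ} {f : ℝ → ℝ → ℝ} {h : ℝ → ℝ}
    (hf : ContinuousOn (fun p : ℝ × ℝ => f p.1 p.2) (Set.Icc 0 T ×ˢ (Set.Icc c d \ {1})))
    (hhint : MeasureTheory.IntegrableOn h (Set.Ioo c d))
    (hb : ∀ t ∈ Set.Icc (0:ℝ) T, ∀ x ∈ Set.Ioo c d \ {1}, |f t x| ≤ h x)
    {t : ℝ} (ht : t ∈ Set.Icc 0 T) :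
    IntegrableOn (f t) (Set.Ioo c d) := by
  have hm : MeasurableSet (Set.Ioo c d \ {1}) :=
    measurableSet_Ioo.diff (measurableSet_singleton 1)
  refine Integrable.mono' hhint ?_ ?_
  · rw [restrict_U]
    exact ContinuousOn.aestronglyMeasurable ((cont_x hf ht).mono
      (Set.sdiff_subset_sdiff_left Set.Ioo_subset_Icc_self)) hm
  · rw [restrict_U]
    filter_upwards [ae_restrict_mem hm] with x hx
    exact hb t ht x hx

lemma space_id {c d T : ℝ} {a a' : ℝ → ℝ}
    {y yt yx ytt ytx ww : ℝ → ℝ → ℝ}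
    (hc1 : c < 1) (h1d : 1 < d) (hT : 0 < T)
    (hw : IsWeight c d a a')
    (hsol : ClassicalSolution c d T a y yt yx ytt ytx ww)
    (hbc : ∀ t ∈ Set.Icc (0:ℝ) T, y t c = 0 ∧ y t d = 0)
    {t : ℝ} (ht : t ∈ Set.Icc 0 T)
    (hl₁ : Filter.Tendsto (fun x => (1 - x) * (yt t x) ^ 2) (𝓝[<] 1) (𝓝 0))
    (hl₂ : Filter.Tendsto (fun x => (x - 1) * (yt t x) ^ 2) (𝓝[>] 1) (𝓝 0))
    (hl₃ : Filter.Tendsto (fun x => (1 - x) * a x * (yx t x) ^ 2) (𝓝[<] 1) (𝓝 0))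
    (hl₄ : Filter.Tendsto (fun x => (x - 1) * a x * (yx t x) ^ 2) (𝓝[>] 1) (𝓝 0))
    (hIntg : IntegrableOn (fun x => 2 * ((x - 1) * (ytx t x * yt t x + yx t x * ytt t x))
      + ((yt t x) ^ 2 + (1 - (x - 1) * a' x / a x) * a x * (yx t x) ^ 2)) (Set.Ioo c d)) :
    ∫ x in Set.Ioo c d, (2 * ((x - 1) * (ytx t x * yt t x + yx t x * ytt t x))
      + ((yt t x) ^ 2 + (1 - (x - 1) * a' x / a x) * a x * (yx t x) ^ 2))
    = (1 - c) * a c * (yx t c) ^ 2 + (d - 1) * a d * (yx t d) ^ 2 := by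
  set f' : ℝ → ℝ := fun x => 2 * ((x - 1) * (ytx t x * yt t x + yx t x * ytt t x))
      + ((yt t x) ^ 2 + (1 - (x - 1) * a' x / a x) * a x * (yx t x) ^ 2) with hf'
  have hcd : c < d := hc1.trans h1d
  have hcS : c ∈ Set.Icc c d \ {1} := ⟨⟨le_rfl, hcd.le⟩, hc1.ne⟩
  have hdS : d ∈ Set.Icc c d \ {1} := ⟨⟨hcd.le, le_rfl⟩, h1d.ne'⟩
  set F : ℝ → ℝ := fun x => (x - 1) * (yt t x) ^ 2 + (x - 1) * a x * (yx t x) ^ 2 with hF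
  have hder : ∀ x ∈ Set.Ioo c d \ {1}, HasDerivAt F (f' x) x := by
    intro x hx
    have hxS := Ioo_sub_S hx
    have hn := S_mem_nhds hx
    have ha := hw.pos x hxS
    have d1 := (hsol.dtx t ht x hxS).hasDerivAt hn
    have d2 := (hsol.dax t ht x hxS).hasDerivAt hn
    have d3 := (hw.hderiv x hxS).hasDerivAt hn
    have d0 : HasDerivAt (fun x : ℝ => x - 1) 1 x := (hasDerivAt_id x).sub_const 1
    have D := (d0.mul (d1.pow 2)).add ((d0.mul (d2.pow 2)).div d3 ha.ne')
    have D2 : HasDerivAt F _ x := D.congr_of_eventuallyEq (by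
      filter_upwards [hn] with z hz
      have := hw.pos z hz
      simp only [hF, Pi.add_apply, Pi.mul_apply, Pi.div_apply, Pi.pow_apply]
      field_simp)
    refine D2.congr_deriv ?_
    simp only [hf', hsol.wave t ht x hx, Pi.mul_apply, Pi.pow_apply]
    field_simp
    ring
  have hFc : ContinuousOn F (Set.Icc c d \ {1}) := by
    have c2 := cont_x hsol.cyt ht
    have c3 := cont_x hsol.cyx ht
    have c4 := hw.cont.mono (Set.sdiff_subset (s := Set.Icc c d) (t := {1}))
    fun_prop
  have hytc : yt t c = 0 ∧ yt t d = 0 := by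
    have hu : UniqueDiffWithinAt ℝ (Set.Icc 0 T) t := uniqueDiffOn_Icc hT t ht
    constructor
    · exact hu.eq_deriv _ (hsol.dt t ht c hcS) ((hasDerivWithinAt_const t _ (0:ℝ)).congr
        (fun s hs => (hbc s hs).1) (hbc t ht).1)
    · exact hu.eq_deriv _ (hsol.dt t ht d hdS) ((hasDerivWithinAt_const t _ (0:ℝ)).congr
        (fun s hs => (hbc s hs).2) (hbc t ht).2)
  have tc : Tendsto F (𝓝[>] c) (𝓝 (F c)) := by
    refine (hFc c hcS).mono_left ?_
    rw [← nhdsWithin_Ioo_eq_nhdsGT hc1]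
    exact nhdsWithin_mono _ fun z hz => ⟨⟨hz.1.le, (hz.2.trans h1d).le⟩, hz.2.ne⟩
  have td : Tendsto F (𝓝[<] d) (𝓝 (F d)) := by
    refine (hFc d hdS).mono_left ?_
    rw [← nhdsWithin_Ioo_eq_nhdsLT h1d]
    exact nhdsWithin_mono _ fun z hz => ⟨⟨(hc1.trans hz.1).le, hz.2.le⟩, hz.1.ne'⟩
  have t1 : Tendsto F (𝓝[<] 1) (𝓝 0) := by
    have := (hl₁.add hl₃).neg
    simp only [add_zero, neg_zero] at this
    refine this.congr fun x => ?_
    simp only [hF]; ring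
  have t2 : Tendsto F (𝓝[>] 1) (𝓝 0) := by
    have := hl₂.add hl₄
    simpa only [add_zero] using this
  have hI : IntervalIntegrable f' volume c d := by
    rw [intervalIntegrable_iff_integrableOn_Ioo_of_le hcd.le]; exact hIntg
  have hI1 : IntervalIntegrable f' volume c 1 := hI.mono_set (by
    rw [Set.uIcc_of_le hc1.le, Set.uIcc_of_le hcd.le]; exact Set.Icc_subset_Icc_right h1d.le)
  have hI2 : IntervalIntegrable f' volume 1 d := hI.mono_set (by
    rw [Set.uIcc_of_le h1d.le, Set.uIcc_of_le hcd.le]; exact Set.Icc_subset_Icc_left hc1.le)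
  have e1 := intervalIntegral.integral_eq_sub_of_hasDerivAt_of_tendsto hc1
    (fun x hx => hder x ⟨⟨hx.1, hx.2.trans h1d⟩, hx.2.ne⟩) hI1 tc t1
  have e2 := intervalIntegral.integral_eq_sub_of_hasDerivAt_of_tendsto h1d
    (fun x hx => hder x ⟨⟨hc1.trans hx.1, hx.2⟩, hx.1.ne'⟩) hI2 t2 td
  rw [← integral_Ioc_eq_integral_Ioo, ← intervalIntegral.integral_of_le hcd.le,
    ← intervalIntegral.integral_add_adjacent_intervals hI1 hI2, e1, e2]
  simp only [hF, hytc.1, hytc.2]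
  ring

/-- Boundary identity via the multiplier `(x-1)·∂_x y`. -/
theorem stmt_17 (c d T : ℝ) (a a' : ℝ → ℝ) (h : ℝ → ℝ)
    (y yt yx ytt ytx ww : ℝ → ℝ → ℝ)
    (hc : 0 ≤ c) (hc1 : c < 1) (h1d : 1 < d) (hd2 : d ≤ 2) (hT : 0 < T)
    (hw : IsWeight c d a a')
    (hsol : ClassicalSolution c d T a y yt yx ytt ytx ww)
    (hbc : ∀ t ∈ Set.Icc (0:ℝ) T, y t c = 0 ∧ y t d = 0)
    (hl₁ : ∀ t ∈ Set.Icc (0:ℝ) T,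
      Filter.Tendsto (fun x => (1 - x) * (yt t x) ^ 2) (𝓝[<] 1) (𝓝 0))
    (hl₂ : ∀ t ∈ Set.Icc (0:ℝ) T,
      Filter.Tendsto (fun x => (x - 1) * (yt t x) ^ 2) (𝓝[>] 1) (𝓝 0))
    (hl₃ : ∀ t ∈ Set.Icc (0:ℝ) T,
      Filter.Tendsto (fun x => (1 - x) * a x * (yx t x) ^ 2) (𝓝[<] 1) (𝓝 0))
    (hl₄ : ∀ t ∈ Set.Icc (0:ℝ) T,
      Filter.Tendsto (fun x => (x - 1) * a x * (yx t x) ^ 2) (𝓝[>] 1) (𝓝 0))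
    (hhint : MeasureTheory.IntegrableOn h (Set.Ioo c d))
    (hdom : ∀ t ∈ Set.Icc (0:ℝ) T, ∀ x ∈ Set.Ioo c d \ {1},
      (yt t x) ^ 2 + (1 + |x - 1| * |a' x| / a x) * a x * (yx t x) ^ 2
        + |x - 1| * (|yx t x * ytt t x| + |yt t x * ytx t x|) ≤ h x) :
    (1 - c) * a c * (∫ t in (0:ℝ)..T, (yx t c) ^ 2)
      + (d - 1) * a d * (∫ t in (0:ℝ)..T, (yx t d) ^ 2)
    = 2 * (∫ x in Set.Ioo c d,
        ((x - 1) * yx T x * yt T x - (x - 1) * yx 0 x * yt 0 x))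
      + ∫ t in (0:ℝ)..T, ∫ x in Set.Ioo c d,
          ((yt t x) ^ 2 + (1 - (x - 1) * a' x / a x) * a x * (yx t x) ^ 2) := by
  have hcd : c < d := hc1.trans h1d
  have hcS : c ∈ Set.Icc c d \ {1} := ⟨⟨le_rfl, hcd.le⟩, hc1.ne⟩
  have hdS : d ∈ Set.Icc c d \ {1} := ⟨⟨hcd.le, le_rfl⟩, h1d.ne'⟩
  let P : ℝ → ℝ → ℝ := fun t x => (x - 1) * (ytx t x * yt t x + yx t x * ytt t x)
  let G : ℝ → ℝ → ℝ := fun t x =>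
    (yt t x) ^ 2 + (1 - (x - 1) * a' x / a x) * a x * (yx t x) ^ 2
  have hPc : ContinuousOn (fun p : ℝ × ℝ => P p.1 p.2)
      (Set.Icc 0 T ×ˢ (Set.Icc c d \ {1})) := by
    have c1 := hsol.cytx
    have c2 := hsol.cyt
    have c3 := hsol.cyx
    have c4 := hsol.cytt
    simp only [P]
    fun_prop
  have hGc : ContinuousOn (fun p : ℝ × ℝ => G p.1 p.2)
      (Set.Icc 0 T ×ˢ (Set.Icc c d \ {1})) := by
    have c2 := hsol.cyt
    have c3 := hsol.cyx
    have ca : ContinuousOn (fun p : ℝ × ℝ => a p.2) (Set.Icc 0 T ×ˢ (Set.Icc c d \ {1})) :=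
      hw.cont.comp (by fun_prop) (fun p hp => hp.2.1)
    have ca' : ContinuousOn (fun p : ℝ × ℝ => a' p.2) (Set.Icc 0 T ×ˢ (Set.Icc c d \ {1})) :=
      hw.contDeriv.comp (by fun_prop) (fun p hp => hp.2)
    have cq : ContinuousOn (fun p : ℝ × ℝ => (p.2 - 1) * a' p.2 / a p.2)
        (Set.Icc 0 T ×ˢ (Set.Icc c d \ {1})) :=
      ContinuousOn.div ((continuous_snd.sub continuous_const).continuousOn.mul ca') ca (fun p hp => (hw.pos _ hp.2).ne')
    exact (c2.pow 2).add (((continuousOn_const.sub cq).mul ca).mul (c3.pow 2))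
  have hPb : ∀ t ∈ Set.Icc (0:ℝ) T, ∀ x ∈ Set.Ioo c d \ {1}, |P t x| ≤ h x := by
    intro t ht x hx
    have ha := hw.pos x (Ioo_sub_S hx)
    refine le_trans ?_ (hdom t ht x hx)
    have h0 : 0 ≤ (yt t x) ^ 2 + (1 + |x - 1| * |a' x| / a x) * a x * (yx t x) ^ 2 := by
      positivity
    have h1 : |P t x| ≤ |x - 1| * (|yx t x * ytt t x| + |yt t x * ytx t x|) := by
      simp only [P, abs_mul (x - 1)]
      refine mul_le_mul_of_nonneg_left ?_ (abs_nonneg _)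
      refine (abs_add_le _ _).trans (le_of_eq ?_)
      rw [add_comm, mul_comm (ytx t x)]
    linarith
  have hGb : ∀ t ∈ Set.Icc (0:ℝ) T, ∀ x ∈ Set.Ioo c d \ {1}, |G t x| ≤ h x := by
    intro t ht x hx
    have ha := hw.pos x (Ioo_sub_S hx)
    refine le_trans ?_ (hdom t ht x hx)
    have h0 : 0 ≤ |x - 1| * (|yx t x * ytt t x| + |yt t x * ytx t x|) := by positivity
    have h1 : |1 - (x - 1) * a' x / a x| ≤ 1 + |x - 1| * |a' x| / a x := by
      refine (abs_sub _ _).trans (le_of_eq ?_)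
      rw [abs_div, abs_mul, abs_of_pos ha, abs_one]
    have h2 : |G t x| ≤ (yt t x) ^ 2
        + (1 + |x - 1| * |a' x| / a x) * a x * (yx t x) ^ 2 := by
      simp only [G]
      refine (abs_add_le _ _).trans ?_
      rw [abs_of_nonneg (sq_nonneg (yt t x)), abs_mul, abs_mul, abs_of_pos ha,
        abs_of_nonneg (sq_nonneg (yx t x))]
      gcongr
    linarith
  have hPi := prod_int hPc hhint hPb
  have hGi := prod_int hGc hhint hGb
  have hX : (∫ x in Set.Ioo c d, ((x - 1) * yx T x * yt T x - (x - 1) * yx 0 x * yt 0 x))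
      = ∫ t in (0:ℝ)..T, ∫ x in Set.Ioo c d, P t x := by
    rw [intervalIntegral.integral_of_le hT.le, integral_integral_swap hPi, restrict_U]
    refine setIntegral_congr_fun (measurableSet_Ioo.diff (measurableSet_singleton 1)) ?_
    intro x hx
    simp only [P]
    rw [← intervalIntegral.integral_of_le hT.le, time_id hT hsol hx]
  have hP1 : IntervalIntegrable (fun t => ∫ x in Set.Ioo c d, P t x) volume 0 T := by
    rw [intervalIntegrable_iff_integrableOn_Ioc_of_le hT.le]
    exact hPi.integral_prod_left
  have hG1 : IntervalIntegrable (fun t => ∫ x in Set.Ioo c d, G t x) volume 0 T := by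
    rw [intervalIntegrable_iff_integrableOn_Ioc_of_le hT.le]
    exact hGi.integral_prod_left
  have hyI : ∀ z ∈ Set.Icc c d \ {1},
      IntervalIntegrable (fun t => (yx t z) ^ 2) volume 0 T := by
    intro z hz
    apply ContinuousOn.intervalIntegrable
    rw [Set.uIcc_of_le hT.le]
    exact (cont_t hsol.cyx hz).pow 2
  change _ = _ + ∫ t in (0:ℝ)..T, ∫ x in Set.Ioo c d, G t x
  rw [hX, ← intervalIntegral.integral_const_mul, ← intervalIntegral.integral_const_mul,
    ← intervalIntegral.integral_const_mul,
    ← intervalIntegral.integral_add ((hyI c hcS).const_mul _) ((hyI d hdS).const_mul _),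
    ← intervalIntegral.integral_add (hP1.const_mul _) hG1]
  refine intervalIntegral.integral_congr ?_
  intro t ht
  rw [Set.uIcc_of_le hT.le] at ht
  have iP := slice_int hPc hhint hPb ht
  have iG := slice_int hGc hhint hGb ht
  have := space_id hc1 h1d hT hw hsol hbc ht (hl₁ t ht) (hl₂ t ht) (hl₃ t ht) (hl₄ t ht)
    ((iP.const_mul 2).add iG)
  simp only
  rw [← this, ← integral_const_mul, ← integral_add (iP.const_mul 2) iG]


end
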